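/- In any 7-schedule of the constructed 2-RAR instance, for each i∈[2m], each machine from {CMach(i,s) : s∈[3]} receives exactly one job from {CJob(i,s) : s∈[3]}. -/

import Mathlib

/-!
The first resource forces `CJob(i,s)` onto a machine `CMach(i',s')` with `i ≤ i'`
(`exists_cMach`): every `TMach` has first capacity below `2n`. Each `CJob` has size at least `4`,
so two of them exceed the load `7`, and the induced self-map of the finite set `[2m] × [3]` is
injective (`cJob_injective`), hence a permutation. A permutation that never decreases the clause
index must preserve it, since the sum of all clause indices is unchanged. So the three `CJob`s
of clause `i` are distributed bijectively over the three `CMach`s of clause `i`.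
-/

open Finset

/-- A 3-SAT* instance: `n` variables, `2m` clauses of 3 literals each
(the first `m` are 1-in-3-clauses, the last `m` are 2-in-3-clauses).
`lit i s` is the literal at position `s` of clause `i`, given as a pair
(variable, polarity). The occurrence bijection `occ` maps the pair `(j,t)`
(the `t`-th occurrence of variable `x_j`, positive for `t = 0,1`, negative for
`t = 2,3`) to the corresponding (clause, position) pair; `occ_spec` says the
literal there is indeed `x_j` with the right polarity. Bijectivity of `occ`
encodes that every literal occurs exactly twice (and forces `6m = 4n`). -/
structure SAT3Star where
  n : ℕ
  m : ℕ
  lit : Fin (2 * m) → Fin 3 → Fin n × Bool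
  occ : (Fin n × Fin 4) ≃ (Fin (2 * m) × Fin 3)
  occ_spec : ∀ jt : Fin n × Fin 4,
    lit (occ jt).1 (occ jt).2 = (jt.1, decide ((jt.2 : ℕ) < 2))

/-- `α` satisfies the 3-SAT* instance: every `k`-in-3-clause has exactly `k`
true literals. -/
def SAT3Star.Satisfies (S : SAT3Star) (α : Fin S.n → Bool) : Prop :=
  ∀ i : Fin (2 * S.m),
    (Finset.univ.filter (fun s : Fin 3 => α (S.lit i s).1 = (S.lit i s).2)).card =
      if (i : ℕ) < S.m then 1 else 2

/-- `⌊t/2⌋` as an element of `Fin 2`. -/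
def half (t : Fin 4) : Fin 2 := ⟨(t : ℕ) / 2, by have := t.isLt; omega⟩

/-- Machines of the 2-RAR instance: `TMach(j,q)` (left) and `CMach(i,s)` (right). -/
abbrev QMach (S : SAT3Star) := (Fin S.n × Fin 2) ⊕ (Fin (2 * S.m) × Fin 3)

/-- Jobs: `TJob(j,ℓ)` (left), `CJob(i,s)` (middle), `VJob(j,t,∘)` (right). -/
abbrev QJob (S : SAT3Star) := (Fin S.n × Fin 3) ⊕ (Fin (2 * S.m) × Fin 3) ⊕ (Fin S.n × Fin 4 × Bool)

/-- Job sizes: `TJob(j,ℓ)` has size 1 for `ℓ∈[2]` and 2 for `ℓ=2`; `CJob(i,s)` has size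
`4 + φ(i,s)`; `VJob(j,t,⊤)` has size 3 and `VJob(j,t,⊥)` has size 2. -/
def qSize (S : SAT3Star) : QJob S → ℕ
  | .inl (_, l) => if (l : ℕ) = 2 then 2 else 1
  | .inr (.inl (i, s)) =>
      4 + (if (s : ℕ) = 0 then 0
           else if (s : ℕ) = 2 then 1
           else if (i : ℕ) < S.m then 0 else 1)
  | .inr (.inr (_, _, b)) => if b then 3 else 2

/-- Resource capacities of the machines (two resources). -/
def qCap (S : SAT3Star) : QMach S → ℕ × ℕ
  | .inl (j, q) => (2 * (j : ℕ) + (q : ℕ), 6 * S.n - (2 * (j : ℕ) + (q : ℕ)))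
  | .inr c => (2 * S.n + (c.1 : ℕ), 4 * ((S.occ.symm c).1 : ℕ) + ((S.occ.symm c).2 : ℕ))

/-- Resource demands of the jobs (two resources). -/
def qDem (S : SAT3Star) : QJob S → ℕ × ℕ
  | .inl (j, l) =>
      if (l : ℕ) = 0 then (2 * (j : ℕ), 6 * S.n - 2 * (j : ℕ))
      else if (l : ℕ) = 1 then (2 * (j : ℕ) + 1, 6 * S.n - (2 * (j : ℕ) + 1))
      else (2 * (j : ℕ), 6 * S.n - (2 * (j : ℕ) + 1))
  | .inr (.inl (i, _)) => (2 * S.n + (i : ℕ), 0)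
  | .inr (.inr (j, t, _)) => (2 * (j : ℕ) + (t : ℕ) / 2, 4 * (j : ℕ) + (t : ℕ))

/-- Eligibility: both resource demands are met by the capacities. -/
def qElig (S : SAT3Star) (job : QJob S) (M : QMach S) : Prop :=
  (qDem S job).1 ≤ (qCap S M).1 ∧ (qDem S job).2 ≤ (qCap S M).2

/-- Load of a machine under a schedule. -/
def qLoad (S : SAT3Star) (σ : QJob S → QMach S) (M : QMach S) : ℕ :=
  ∑ j ∈ Finset.univ.filter (fun j => σ j = M), qSize S j

/-- A 7-schedule: every job on an eligible machine, every machine with load exactly 7. -/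
def SevenSchedule (S : SAT3Star) (σ : QJob S → QMach S) : Prop :=
  (∀ j, qElig S j (σ j)) ∧ ∀ M, qLoad S σ M = 7

/-- `CJob(i,s)` is processed on some `CMach(i',s')` with `i ≤ i'`. -/
lemma exists_cMach (S : SAT3Star) (σ : QJob S → QMach S) (h : SevenSchedule S σ)
    (c : Fin (2 * S.m) × Fin 3) :
    ∃ d : Fin (2 * S.m) × Fin 3, σ (.inr (.inl c)) = .inr d ∧ c.1 ≤ d.1 := by
  have he := (h.1 (.inr (.inl c))).1
  rcases hd : σ (.inr (.inl c)) with ⟨j, q⟩ | d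
  · rw [hd] at he
    simp only [qDem, qCap] at he
    have := j.isLt
    have := q.isLt
    omega
  · rw [hd] at he
    simp only [qDem, qCap] at he
    exact ⟨d, rfl, Fin.le_def.2 (by omega)⟩

lemma four_le_qSize_cJob (S : SAT3Star) (c : Fin (2 * S.m) × Fin 3) :
    4 ≤ qSize S (.inr (.inl c)) := Nat.le_add_right _ _

/-- No machine can receive two `CJob`s, as their total size would be at least `8`. -/
lemma cJob_injective (S : SAT3Star) (σ : QJob S → QMach S) (h : SevenSchedule S σ)
    {c d : Fin (2 * S.m) × Fin 3} (hcd : σ (.inr (.inl c)) = σ (.inr (.inl d))) : c = d := by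
  by_contra hne
  have hload := h.2 (σ (.inr (.inl d)))
  have hpair : ({.inr (.inl c), .inr (.inl d)} : Finset (QJob S)) ⊆
      Finset.univ.filter (fun j => σ j = σ (.inr (.inl d))) := by
    intro x hx
    simp only [Finset.mem_insert, Finset.mem_singleton] at hx
    rcases hx with rfl | rfl <;> simp [hcd]
  have hle := Finset.sum_le_sum_of_subset (f := qSize S) hpair
  rw [Finset.sum_pair (by simpa using hne)] at hle
  have hc := four_le_qSize_cJob S c
  have hd := four_le_qSize_cJob S d
  unfold qLoad at hload
  omega

/-- in any 7-schedule of the 2-RAR instance, each machine `CMach(i,s)`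
receives exactly one job among `{CJob(i,s') : s' ∈ [3]}`. -/
theorem statement10 (S : SAT3Star) (σ : QJob S → QMach S) (h : SevenSchedule S σ)
    (i : Fin (2 * S.m)) (s : Fin 3) :
    ∃! s' : Fin 3, σ (.inr (.inl (i, s'))) = .inr (i, s) := by
  choose f hf hle using exists_cMach S σ h
  have hinj : Function.Injective f := fun c d hcd =>
    cJob_injective S σ h (by rw [hf, hf, hcd])
  have hbij : Function.Bijective f := Finite.injective_iff_bijective.1 hinj
  -- Reindexing along the permutation `f` preserves the sum of the clause indices.
  have hsum : ∑ c : Fin (2 * S.m) × Fin 3, (c.1 : ℕ) = ∑ c, ((f c).1 : ℕ) :=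
    (hbij.sum_comp (fun c : Fin (2 * S.m) × Fin 3 => (c.1 : ℕ))).symm
  have hfix := (Finset.sum_eq_sum_iff_of_le (fun c _ => Fin.le_def.1 (hle c))).1 hsum
  obtain ⟨⟨i', s'⟩, hs'⟩ := hbij.2 (i, s)
  have hi : i' = i := by
    have := hfix (i', s') (Finset.mem_univ _)
    rw [hs'] at this
    exact Fin.ext this
  subst hi
  refine ⟨s', by simpa [hs'] using hf (i', s'), fun t ht => ?_⟩
  have := cJob_injective S σ h (ht.trans (by rw [hf, hs']) :
    σ (.inr (.inl (i', t))) = σ (.inr (.inl (i', s'))))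
  exact (Prod.ext_iff.1 this).2
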